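/- arXiv:2506.07868 — 2 statements merged into one kernel-verified Lean document; each statement's English description precedes it below -/
import Mathlib

section
/- Let ε > 0, let 0 < β < 1, and let m be a positive integer with m ≥ (2/ε) · ln(1/β). If Y ~ CensoredDiscreteLaplace(μ = m, s = 1/ε, ℓ = 0, u = m), then Pr[Y < m/2] ≤ e^{−mε/2} ≤ β. -/
/-- Probability mass function of the discrete Laplace distribution with shift `μ` and scale `s`. -/
noncomputable def dLapPMF (μ : ℤ) (s : ℝ) (x : ℤ) : ℝ :=
  ((Real.exp (1/s) - 1) / (Real.exp (1/s) + 1)) * Real.exp (-|(x : ℝ) - (μ : ℝ)| / s)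

/-- Cumulative distribution function of the discrete Laplace distribution. -/
noncomputable def dLapCDF (μ : ℤ) (s : ℝ) (x : ℤ) : ℝ :=
  if x ≤ μ then (Real.exp (1/s) / (Real.exp (1/s) + 1)) * Real.exp (-((μ : ℝ) - (x : ℝ)) / s)
  else 1 - (1 / (Real.exp (1/s) + 1)) * Real.exp (-((x : ℝ) - (μ : ℝ)) / s)

/-- Probability mass function of the censored discrete Laplace distribution
`CensoredDiscreteLaplace(μ, s, ℓ, u)`. -/
noncomputable def cdLapPMF (μ : ℤ) (s : ℝ) (ℓ u : ℤ) (k : ℤ) : ℝ :=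
  if k = ℓ then dLapCDF μ s ℓ
  else if k = u then 1 - dLapCDF μ s (u - 1)
  else if ℓ < k ∧ k < u then dLapPMF μ s k
  else 0

/-!
Censoring to `[ℓ, u]` moves mass only within `(-∞, ℓ]` and within `[u, ∞)`, so `Pr[Y ≤ x]` is the
uncensored `F(x)` for `ℓ ≤ x < u`: the atom at `ℓ` is `F(ℓ)`, and the remaining masses telescope.
Since `F(x) ≤ exp (-(μ - x) / s)`, the tail bound follows by taking for `x` the largest integer
below the threshold.
-/

theorem exp_neg_div_le_of_mul_log_le {s β r : ℝ} (hs : 0 < s) (hβ : 0 < β)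
    (h : s * Real.log (1 / β) ≤ r) : Real.exp (-r / s) ≤ β := by
  rw [← Real.le_log_iff_exp_le hβ, div_le_iff₀ hs]
  rw [one_div, Real.log_inv] at h
  linarith

section DiscreteLaplace

variable (μ : ℤ) (s : ℝ)

theorem dLapCDF_of_le {x : ℤ} (hx : x ≤ μ) :
    dLapCDF μ s x =
      Real.exp (1 / s) / (Real.exp (1 / s) + 1) * Real.exp (-((μ : ℝ) - x) / s) :=
  if_pos hx

theorem dLapCDF_of_ge {x : ℤ} (hx : μ ≤ x) :
    dLapCDF μ s x = 1 - 1 / (Real.exp (1 / s) + 1) * Real.exp (-((x : ℝ) - μ) / s) := by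
  rcases hx.eq_or_lt with rfl | hlt
  · rw [dLapCDF_of_le μ s le_rfl, sub_self, neg_zero, zero_div, Real.exp_zero]
    field_simp
    ring
  · exact if_neg hlt.not_ge

theorem dLapCDF_add_one (x : ℤ) :
    dLapCDF μ s (x + 1) = dLapCDF μ s x + dLapPMF μ s (x + 1) := by
  rcases lt_or_ge x μ with hlt | hge
  · have hexp : Real.exp (-((μ : ℝ) - ↑(x + 1)) / s) =
        Real.exp (1 / s) * Real.exp (-((μ : ℝ) - x) / s) := by
      rw [← Real.exp_add]
      push_cast
      ring_nf
    have hle : ((x + 1 : ℤ) : ℝ) ≤ μ := by exact_mod_cast hlt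
    rw [dLapCDF_of_le μ s hlt, dLapCDF_of_le μ s hlt.le, dLapPMF, abs_sub_comm,
      abs_of_nonneg (sub_nonneg.mpr hle), hexp]
    field_simp
    ring
  · have hexp : Real.exp (-((x : ℝ) - μ) / s) =
        Real.exp (1 / s) * Real.exp (-(((x + 1 : ℤ) : ℝ) - μ) / s) := by
      rw [← Real.exp_add]
      push_cast
      ring_nf
    have hle : (μ : ℝ) ≤ (x + 1 : ℤ) := by exact_mod_cast hge.trans (lt_add_one x).le
    rw [dLapCDF_of_ge μ s (by omega), dLapCDF_of_ge μ s hge, dLapPMF,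
      abs_of_nonneg (sub_nonneg.mpr hle), hexp]
    field_simp
    ring

variable {s} in
theorem dLapCDF_le_exp (hs : 0 ≤ s) (x : ℤ) :
    dLapCDF μ s x ≤ Real.exp (-((μ : ℝ) - x) / s) := by
  rcases le_total x μ with hx | hx
  · rw [dLapCDF_of_le μ s hx]
    exact mul_le_of_le_one_left (Real.exp_nonneg _)
      (div_le_one_of_le₀ (le_add_of_nonneg_right zero_le_one) (by positivity))
  · have hle : (μ : ℝ) ≤ x := by exact_mod_cast hx
    calc dLapCDF μ s x ≤ 1 := by
          rw [dLapCDF_of_ge μ s hx]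
          exact sub_le_self _ (by positivity)
      _ ≤ Real.exp (-((μ : ℝ) - x) / s) :=
          Real.one_le_exp (div_nonneg (by linarith) hs)

end DiscreteLaplace

section CensoredDiscreteLaplace

variable (μ : ℤ) (s : ℝ) {ℓ u : ℤ}

theorem cdLapPMF_left (u : ℤ) : cdLapPMF μ s ℓ u ℓ = dLapCDF μ s ℓ :=
  if_pos rfl

theorem cdLapPMF_of_mem_Ioo {k : ℤ} (hk : k ∈ Set.Ioo ℓ u) :
    cdLapPMF μ s ℓ u k = dLapPMF μ s k := by
  rw [cdLapPMF, if_neg hk.1.ne', if_neg hk.2.ne, if_pos ⟨hk.1, hk.2⟩]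

theorem cdLapPMF_of_lt {k : ℤ} (hkℓ : k < ℓ) (hku : k < u) : cdLapPMF μ s ℓ u k = 0 := by
  rw [cdLapPMF, if_neg hkℓ.ne, if_neg hku.ne, if_neg fun h => hkℓ.not_gt h.1]

theorem sum_Icc_cdLapPMF {x : ℤ} (hx : ℓ ≤ x) (hxu : x < u) :
    ∑ k ∈ Finset.Icc ℓ x, cdLapPMF μ s ℓ u k = dLapCDF μ s x := by
  induction x, hx using Int.leInduction with
  | base => rw [Finset.Icc_self, Finset.sum_singleton, cdLapPMF_left]
  | succ x hx ih =>
    rw [← Finset.insert_Icc_right_eq_Icc_add_one (by omega),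
      Finset.sum_insert (by simp), ih (by omega), cdLapPMF_of_mem_Ioo μ s ⟨by omega, hxu⟩,
      dLapCDF_add_one, add_comm]

theorem hasSum_indicator_Iic_cdLapPMF {x : ℤ} (hx : ℓ ≤ x) (hxu : x < u) :
    HasSum ((Set.Iic x).indicator (cdLapPMF μ s ℓ u)) (dLapCDF μ s x) := by
  have hsum : ∑ k ∈ Finset.Icc ℓ x, (Set.Iic x).indicator (cdLapPMF μ s ℓ u) k =
      dLapCDF μ s x := by
    rw [← sum_Icc_cdLapPMF μ s hx hxu]
    exact Finset.sum_congr rfl fun k hk =>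
      Set.indicator_of_mem (Set.mem_Iic.mpr (Finset.mem_Icc.mp hk).2) _
  rw [← hsum]
  refine hasSum_sum_of_ne_finset_zero fun k hk => Set.indicator_apply_eq_zero.mpr fun hkx => ?_
  have hkℓ : k < ℓ := lt_of_not_ge fun hℓk => hk (Finset.mem_Icc.mpr ⟨hℓk, hkx⟩)
  exact cdLapPMF_of_lt μ s hkℓ (lt_of_le_of_lt hkx hxu)

theorem indicator_Iic_cdLapPMF_eq_zero {x : ℤ} (hx : x < ℓ) (hxu : x < u) :
    (Set.Iic x).indicator (cdLapPMF μ s ℓ u) = 0 :=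
  funext fun _ => Set.indicator_apply_eq_zero.mpr fun hk =>
    cdLapPMF_of_lt μ s (lt_of_le_of_lt hk hx) (lt_of_le_of_lt hk hxu)

variable {s} in
theorem tsum_indicator_Iic_cdLapPMF_le (hs : 0 ≤ s) {x : ℤ} (hxu : x < u) :
    ∑' k, (Set.Iic x).indicator (cdLapPMF μ s ℓ u) k ≤ Real.exp (-((μ : ℝ) - x) / s) := by
  rcases lt_or_ge x ℓ with hx | hx
  · rw [indicator_Iic_cdLapPMF_eq_zero μ s hx hxu]
    exact tsum_zero.trans_le (Real.exp_nonneg _)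
  · rw [(hasSum_indicator_Iic_cdLapPMF μ s hx hxu).tsum_eq]
    exact dLapCDF_le_exp μ hs x

end CensoredDiscreteLaplace

theorem censored_discrete_laplace_lower_tail_general
    (μ ℓ u : ℤ) (s t β : ℝ) (hs : 0 < s) (hβ : 0 < β) (ht : t ≤ u)
    (hμt : s * Real.log (1 / β) ≤ μ - t) :
    (∑' k : ℤ, Set.indicator {k : ℤ | (k : ℝ) < t} (cdLapPMF μ s ℓ u) k)
      ≤ Real.exp (-((μ : ℝ) - t) / s) ∧ Real.exp (-((μ : ℝ) - t) / s) ≤ β := by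
  refine ⟨?_, exp_neg_div_le_of_mul_log_le hs hβ hμt⟩
  have hxu : ⌈t⌉ - 1 < u := Int.sub_one_lt_iff.mpr (Int.ceil_le.mpr ht)
  have hxt : ((⌈t⌉ - 1 : ℤ) : ℝ) ≤ t := (Int.lt_ceil.mp (sub_one_lt ⌈t⌉)).le
  have hset : {k : ℤ | (k : ℝ) < t} = Set.Iic (⌈t⌉ - 1) := by
    ext k
    simp only [Set.mem_ofPred_eq, Set.mem_Iic, Int.le_sub_one_iff, Int.lt_ceil]
  rw [hset]
  calc _ ≤ Real.exp (-((μ : ℝ) - (⌈t⌉ - 1 : ℤ)) / s) :=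
        tsum_indicator_Iic_cdLapPMF_le μ hs.le hxu
    _ ≤ Real.exp (-((μ : ℝ) - t) / s) := by gcongr

/-- If `m ≥ (2/ε)·ln(1/β)` and `Y ~ CensoredDiscreteLaplace(μ = m, s = 1/ε, ℓ = 0, u = m)`,
then `Pr[Y < m/2] ≤ e^{-mε/2} ≤ β`. -/
theorem censored_discrete_laplace_lower_tail
    (ε β : ℝ) (hε : 0 < ε) (hβ0 : 0 < β) (hβ1 : β < 1)
    (m : ℕ) (hm : 1 ≤ m) (hmβ : (2 / ε) * Real.log (1 / β) ≤ (m : ℝ)) :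
    (∑' k : ℤ, Set.indicator {k : ℤ | (k : ℝ) < (m : ℝ) / 2}
        (cdLapPMF (m : ℤ) (1 / ε) 0 (m : ℤ)) k)
      ≤ Real.exp (-((m : ℝ) * ε) / 2) ∧ Real.exp (-((m : ℝ) * ε) / 2) ≤ β := by
  have hexp : -((m : ℝ) / 2) / (1 / ε) = -((m : ℝ) * ε) / 2 := by
    rw [div_div_eq_mul_div]
    ring
  have htail := censored_discrete_laplace_lower_tail_general m 0 m (1 / ε) (m / 2) β
    (one_div_pos.mpr hε) hβ0 (half_le_self m.cast_nonneg)
    (by rw [Int.cast_natCast]; linear_combination hmβ / 2)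
  rwa [Int.cast_natCast, sub_half, hexp] at htail
end

section
/- Fix integers k ≥ 2 and c ≥ 2. For every integer n ≥ 1, the adaptive-sampler output Ŷ distributed according to f_{(n,c)} satisfies Pr[Ŷ < n/2] ≤ n/(n/2 + k)^c; in particular Pr[Ŷ < n/2] = O(1/n^{c−1}) as n → ∞. -/
/-- Success probability of flip `i+1` of the adaptive sampler: `p_n(j) = 1/(max(n-j,0)+k)^c`
(natural subtraction truncates at zero). -/
noncomputable def pAdapt (k c n j : ℕ) : ℝ := 1 / (((n - j + k : ℕ) : ℝ)) ^ c

/-- Geometric PMF `Geom_q(i) = (1-q)^{i-1}·q` for `i ≥ 1`. -/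
noncomputable def geomPMF (q : ℝ) (i : ℕ) : ℝ := (1 - q) ^ (i - 1) * q

/-- The adaptive-sampler output distribution `f_{(n,c)}` on ℕ:
`f_{(n,c)}(i) = p_n(i)·∏_{j=0}^{i-1}(1 - p_n(j))` for `i ≤ n`, and
`f_{(n,c)}(i) = Geom_{1/k^c}(i-n)·∏_{j=0}^{n-1}(1 - p_n(j))` for `i > n`. -/
noncomputable def fAdapt (k c n i : ℕ) : ℝ :=
  if i ≤ n then pAdapt k c n i * ∏ j ∈ Finset.range i, (1 - pAdapt k c n j)
  else geomPMF (1 / (k : ℝ) ^ c) (i - n) * ∏ j ∈ Finset.range n, (1 - pAdapt k c n j)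

/-!
An output `i < t ≤ n` forces flip `i + 1` to succeed, and that flip has success probability at most
`1 / (n - t + k) ^ c`. A union bound over the `⌈t⌉` possible outputs bounds `Pr[Ŷ < t]`; then take
`t = n / 2`.
-/

lemma pAdapt_nonneg (k c n j : ℕ) : 0 ≤ pAdapt k c n j := by
  unfold pAdapt
  positivity

-- At `n - j + k = 0` the value is `1 / 0 ^ c`, which is `1` for `c = 0` and `0` otherwise.
lemma pAdapt_le_one (k c n j : ℕ) : pAdapt k c n j ≤ 1 := by
  rw [pAdapt, one_div, ← Nat.cast_pow]
  exact Nat.cast_inv_le_one _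

lemma pAdapt_le_one_div_pow {k n j : ℕ} {t : ℝ} (c : ℕ) (hjt : j ≤ t) (hpos : 0 < n - t + k) :
    pAdapt k c n j ≤ 1 / (n - t + k) ^ c := by
  have hsub : (n : ℝ) ≤ (n - j : ℕ) + j := by exact_mod_cast le_tsub_add
  have hbase : (n : ℝ) - t + k ≤ (n - j + k : ℕ) := by
    push_cast
    linarith
  exact one_div_le_one_div_of_le (pow_pos hpos c) (pow_le_pow_left₀ hpos.le hbase c)

lemma fAdapt_le_pAdapt {n i : ℕ} (k c : ℕ) (hin : i ≤ n) : fAdapt k c n i ≤ pAdapt k c n i := by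
  rw [fAdapt, if_pos hin]
  exact mul_le_of_le_one_right (pAdapt_nonneg k c n i) <|
    Finset.prod_le_one (fun j _ => sub_nonneg.2 (pAdapt_le_one k c n j))
      (fun j _ => sub_le_self 1 (pAdapt_nonneg k c n j))

lemma tsum_indicator_cast_lt_eq_sum_range_ceil {R M : Type*} [Semiring R] [LinearOrder R]
    [FloorSemiring R] [AddCommMonoid M] [TopologicalSpace M] (f : ℕ → M) (t : R) :
    ∑' i, Set.indicator {i : ℕ | (i : R) < t} f i = ∑ i ∈ Finset.range ⌈t⌉₊, f i := by
  have hset : {i : ℕ | (i : R) < t} = Finset.range ⌈t⌉₊ := by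
    ext i
    simp only [Set.mem_ofPred_eq, Finset.coe_range, Set.mem_Iio, Nat.lt_ceil]
  rw [hset, ← tsum_subtype, Finset.tsum_subtype']

lemma tsum_indicator_lt_fAdapt_le {k n : ℕ} {t : ℝ} (c : ℕ) (htn : t ≤ n)
    (hpos : 0 < n - t + k) :
    ∑' i, Set.indicator {i : ℕ | (i : ℝ) < t} (fAdapt k c n) i ≤ ⌈t⌉₊ / (n - t + k) ^ c := by
  have hterm : ∀ i ∈ Finset.range ⌈t⌉₊, fAdapt k c n i ≤ 1 / (n - t + k) ^ c := by
    intro i hi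
    have hit : (i : ℝ) < t := Nat.lt_ceil.1 (Finset.mem_range.1 hi)
    have hin : i ≤ n := by exact_mod_cast hit.le.trans htn
    exact (fAdapt_le_pAdapt k c hin).trans (pAdapt_le_one_div_pow c hit.le hpos)
  calc ∑' i, Set.indicator {i : ℕ | (i : ℝ) < t} (fAdapt k c n) i
      = ∑ i ∈ Finset.range ⌈t⌉₊, fAdapt k c n i := tsum_indicator_cast_lt_eq_sum_range_ceil _ t
    _ ≤ (Finset.range ⌈t⌉₊).card • (1 / (n - t + k) ^ c) := Finset.sum_le_card_nsmul _ _ _ hterm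
    _ = ⌈t⌉₊ / (n - t + k) ^ c := by rw [Finset.card_range, nsmul_eq_mul, mul_one_div]

lemma div_half_add_pow_succ_le {K : Type*} [Field K] [LinearOrder K] [IsStrictOrderedRing K]
    {x a : K} (hx : 0 < x) (ha : 0 ≤ a) (d : ℕ) :
    x / (x / 2 + a) ^ (d + 1) ≤ 2 ^ (d + 1) / x ^ d :=
  calc x / (x / 2 + a) ^ (d + 1)
      ≤ x / (x / 2) ^ (d + 1) := by
        gcongr
        exact le_add_of_nonneg_right ha
    _ = 2 ^ (d + 1) / x ^ d := by
        rw [div_pow]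
        field_simp
        ring

theorem adaptive_sampler_lower_tail_general {c n : ℕ} (k : ℕ) (hc : c ≠ 0) (hn : 1 ≤ n) :
    (∑' i : ℕ, Set.indicator {i : ℕ | (i : ℝ) < (n : ℝ) / 2} (fAdapt k c n) i)
        ≤ (n : ℝ) / ((n : ℝ) / 2 + (k : ℝ)) ^ c ∧
      (∑' i : ℕ, Set.indicator {i : ℕ | (i : ℝ) < (n : ℝ) / 2} (fAdapt k c n) i)
        ≤ 2 ^ c / (n : ℝ) ^ (c - 1) := by
  have hn_pos : (0 : ℝ) < n := by exact_mod_cast hn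
  have hhalf : (n : ℝ) / 2 ≤ n := half_le_self hn_pos.le
  have htail : ∑' i, Set.indicator {i : ℕ | (i : ℝ) < (n : ℝ) / 2} (fAdapt k c n) i
      ≤ n / ((n : ℝ) / 2 + k) ^ c := by
    have hbound := tsum_indicator_lt_fAdapt_le (k := k) c hhalf (by rw [sub_half]; positivity)
    rw [sub_half] at hbound
    refine hbound.trans ?_
    gcongr
    exact Nat.ceil_le.2 hhalf
  obtain ⟨d, rfl⟩ := Nat.exists_eq_succ_of_ne_zero hc
  exact ⟨htail, htail.trans (div_half_add_pow_succ_le hn_pos k.cast_nonneg d)⟩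

/-- Lower-tail bound for the adaptive sampler: `Pr[Ŷ < n/2] ≤ n/(n/2 + k)^c`; in particular
`Pr[Ŷ < n/2] = O(1/n^{c-1})` as `n → ∞`. -/
theorem adaptive_sampler_lower_tail (k c : ℕ) (hk : 2 ≤ k) (hc : 2 ≤ c) :
    (∀ n : ℕ, 1 ≤ n →
      (∑' i : ℕ, Set.indicator {i : ℕ | (i : ℝ) < (n : ℝ) / 2} (fAdapt k c n) i)
        ≤ (n : ℝ) / ((n : ℝ) / 2 + (k : ℝ)) ^ c) ∧
    ∃ C : ℝ, 0 < C ∧ ∀ n : ℕ, 1 ≤ n →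
      (∑' i : ℕ, Set.indicator {i : ℕ | (i : ℝ) < (n : ℝ) / 2} (fAdapt k c n) i)
        ≤ C / (n : ℝ) ^ (c - 1) := by
  have hc_ne : c ≠ 0 := by lia
  exact ⟨fun n hn => (adaptive_sampler_lower_tail_general k hc_ne hn).1, 2 ^ c, by positivity,
    fun n hn => (adaptive_sampler_lower_tail_general k hc_ne hn).2⟩
end
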